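/- arXiv:1803.11026 — 2 statements merged into one kernel-verified Lean document; each statement's English description precedes it below -/
import Mathlib

section
/- One has (i) ∫_{ℝ³} (w_μ(z) − U_β(z)) f_β(z) dz = 0; (ii) ∫_{ℝ³} w_μ(z) f_β(z) dz = ∫_{ℝ³} U_β(z) f_β(z) dz = 8π a κ_β μ; and consequently (iii) for μ sufficiently small, | μ⁻¹ ∫_{ℝ³} U_β(z) f_β(z) dz − 8π a | ≤ C μ^{1−β̃} for a constant C depending only on a. -/
open Set MeasureTheory Real

/-- The radial scattering data: the rescaled interaction `w_μ(r) = μ⁻² w(r/μ)` (given through its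
radial profile `w`), its zero-energy scattering solution `j̃` in radial form, and for each `κ ≥ 1`
the function `f̃_κ` which equals `κ j̃` on `[0, μ^β̃]` and solves
`f̃_κ'' = -½ a μ^(1-3β̃) f̃_κ` beyond `μ^β̃`. -/
structure ScatteringODE where
  a : ℝ
  beta : ℝ
  mu : ℝ
  w : ℝ → ℝ
  jt : ℝ → ℝ
  jt' : ℝ → ℝ
  ft : ℝ → ℝ → ℝ
  ft' : ℝ → ℝ → ℝ
  ha : 0 < a
  hbeta : beta ∈ Set.Ioo (1/3 : ℝ) 1
  hmu : mu ∈ Set.Ioo (0 : ℝ) 1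
  hw_nonneg : ∀ r, 0 ≤ w r
  hw_bdd : ∃ M, ∀ r, w r ≤ M
  hw_supp : ∀ r, 1 < r → w r = 0
  hjt_deriv : ∀ r, HasDerivAt jt (jt' r) r
  hjt_zero : jt 0 = 0
  hjt_ode : ∀ r ∈ Set.Ioo 0 mu, HasDerivAt jt' ((1/2) * (mu⁻¹ ^ 2 * w (r / mu)) * jt r) r
  hjt_lin : ∀ r, mu ≤ r → jt r = r - mu * a
  hjt_nonneg : ∀ r, 0 ≤ r → 0 ≤ jt r
  hjt_mono : MonotoneOn jt (Set.Ici 0)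
  hjt_le : ∀ r, 0 ≤ r → jt r ≤ r
  hft_deriv : ∀ κ r : ℝ, HasDerivAt (ft κ) (ft' κ r) r
  hft_eq : ∀ κ : ℝ, ∀ r ∈ Set.Icc (0:ℝ) (mu ^ beta), ft κ r = κ * jt r
  hft_ode : ∀ κ r : ℝ, mu ^ beta < r →
      HasDerivAt (ft' κ) (-(1/2) * a * mu ^ (1 - 3 * beta) * ft κ r) r

/-- A scattering setup together with the tangency parameter `κ_β ∈ (1, μ^β̃/(μ^β̃ - μa))` and the
minimal tangency radius `R_β ∈ (μ^β̃, ∞)` at which `f̃_{κ_β}` is tangent to the line `r ↦ r`. -/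
structure TangentScattering extends ScatteringODE where
  hsmall : mu * a < mu ^ beta
  kappa : ℝ
  Rb : ℝ
  hkappa : kappa ∈ Set.Ioo 1 (mu ^ beta / (mu ^ beta - mu * a))
  hRb : mu ^ beta < Rb
  htan_val : ft kappa Rb = Rb
  htan_der : ft' kappa Rb = 1
  hRb_min : ∀ R : ℝ, mu ^ beta < R → ft kappa R = R → ft' kappa R = 1 → Rb ≤ R

/-- The radial form `f̃` of the scattering solution `f_β`, extended by `f̃(r) = r` for `r ≥ R_β`. -/
noncomputable def TangentScattering.fext (S : TangentScattering) (r : ℝ) : ℝ :=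
  if r < S.Rb then S.ft S.kappa r else r

/-- The scattering solution `f_β(z) = f̃(|z|)/|z|` (for `z ≠ 0`). -/
noncomputable def TangentScattering.fbeta (S : TangentScattering)
    (z : EuclideanSpace ℝ (Fin 3)) : ℝ :=
  S.fext ‖z‖ / ‖z‖

/-- The scaled interaction `w_μ(z) = μ⁻² w(|z|/μ)` as a function on `ℝ³`. -/
noncomputable def ScatteringODE.wmu3 (S : ScatteringODE)
    (z : EuclideanSpace ℝ (Fin 3)) : ℝ :=
  S.mu⁻¹ ^ 2 * S.w (‖z‖ / S.mu)

/-- The auxiliary potential `U_β(z) = a μ^(1-3β̃)` for `μ^β̃ < |z| < R_β` and `0` otherwise. -/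
noncomputable def TangentScattering.Ub (S : TangentScattering)
    (z : EuclideanSpace ℝ (Fin 3)) : ℝ :=
  if S.mu ^ S.beta < ‖z‖ ∧ ‖z‖ < S.Rb then S.a * S.mu ^ (1 - 3 * S.beta) else 0

/-! For `u(z) = f(|z|) / |z|` with `f'' = V f` one has `Δu = V u` on `ℝ³`, so integrating `V u` over
a spherical shell leaves only the flux `4π (r f'(r) - f(r))` of `∇u` through the two boundary
spheres. With `V = w_μ / 2` on the ball of radius `μ` the inner flux vanishes and the outer one is
read off from `f̃ = κ_β (r - μ a)`. With `V = -U_β / 2` the inner flux has that same value, because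
`r f' - f` does not change where `f` is affine, and the outer one vanishes by tangency to `r ↦ r`.
The estimate then only needs `κ_β - 1 ≲ μ^(1-β̃)`, which is uniform because a non-negative `j̃`
forces `a < 1`. -/

section RadialCalculus

open Filter Topology

variable {E : Type*} [NormedAddCommGroup E] [NormedSpace ℝ E] {f f' f'' g : ℝ → E} {a b : ℝ}

theorem eqOn_Icc_of_hasDerivWithinAt_of_eqOn_Ioo (hab : a < b)
    (hf : ∀ x ∈ Icc a b, HasDerivWithinAt f (f' x) (Icc a b) x) (hg : ContinuousOn g (Icc a b))
    (hfg : EqOn f' g (Ioo a b)) : EqOn f' g (Icc a b) := by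
  have hderiv : ∀ x ∈ Ioo a b, HasDerivAt f (g x) x := fun x hx =>
    hfg hx ▸ (hf x (Ioo_subset_Icc_self hx)).hasDerivAt (Icc_mem_nhds hx.1 hx.2)
  intro x hx
  refine (uniqueDiffOn_Icc hab x hx).eq_deriv _ (hf x hx) ?_
  rw [hasDerivWithinAt_iff_hasFDerivWithinAt, ← closure_Ioo hab.ne]
  refine hasFDerivWithinAt_closure_of_tendsto_fderiv
    (fun y hy => (hderiv y hy).differentiableAt.differentiableWithinAt)
    (convex_Ioo a b) isOpen_Ioo (fun y hy => ?_) ?_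
  · rw [closure_Ioo hab.ne] at hy
    exact (hf y hy).continuousWithinAt.mono Ioo_subset_Icc_self
  · have hlim : Tendsto g (𝓝[Ioo a b] x) (𝓝 (g x)) := (hg x hx).mono Ioo_subset_Icc_self
    refine (((ContinuousLinearMap.smulRightL ℝ ℝ E 1).continuous.tendsto _).comp hlim).congr' ?_
    filter_upwards [self_mem_nhdsWithin] with y hy using (hderiv y hy).hasFDerivAt.fderiv.symm

/-- The flux, up to the factor `4π`, of the gradient of `z ↦ f(|z|) / |z|` through the sphere of
radius `r` in `ℝ³`; the derivative `f'` is passed explicitly. -/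
def radialFlux (f f' : ℝ → E) (r : ℝ) : E :=
  r • f' r - f r

theorem integral_fun_norm_euclideanSpace_fin_three (g : ℝ → E) :
    ∫ z : EuclideanSpace ℝ (Fin 3), g ‖z‖ = (4 * π) • ∫ r in Ioi (0 : ℝ), r ^ 2 • g r := by
  have hball : volume.real (Metric.ball (0 : EuclideanSpace ℝ (Fin 3)) 1) = π * 4 / 3 := by
    rw [measureReal_def, EuclideanSpace.volume_ball_fin_three, ENNReal.ofReal_one, one_pow,
      one_mul, ENNReal.toReal_ofReal (by positivity)]
  rw [integral_fun_norm_addHaar volume g, hball, finrank_euclideanSpace, Fintype.card_fin,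
    ← Nat.cast_smul_eq_nsmul ℝ, smul_smul]
  congr 1
  push_cast
  ring

variable [CompleteSpace E]

theorem integrableOn_of_hasDerivAt_of_norm_le {s : Set ℝ} {K : ℝ} (hs : MeasurableSet s)
    (hs_fin : volume s < ⊤) (hf : ∀ x ∈ s, HasDerivAt f (f' x) x) (hK : ∀ x ∈ s, ‖f' x‖ ≤ K) :
    IntegrableOn f' s := by
  refine .of_bound hs_fin ?_ K (ae_restrict_of_forall_mem hs hK)
  exact (aestronglyMeasurable_deriv f _).congr
    (ae_restrict_of_forall_mem hs fun x hx => (hf x hx).deriv)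

theorem continuousOn_Icc_of_intervalIntegrable_deriv (hab : a < b)
    (hf : ∀ x ∈ Icc a b, HasDerivWithinAt f (f' x) (Icc a b) x)
    (hf' : ∀ x ∈ Ioo a b, HasDerivAt f' (f'' x) x) (hint : IntervalIntegrable f'' volume a b) :
    ContinuousOn f' (Icc a b) := by
  obtain ⟨m, hm⟩ := nonempty_Ioo.2 hab
  have hprim : ContinuousOn (fun x => f' m + ∫ t in m..x, f'' t) (Icc a b) := by
    rw [← uIcc_of_le hab.le]
    refine continuousOn_const.add (intervalIntegral.continuousOn_primitive_interval' hint ?_)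
    exact Icc_subset_uIcc (Ioo_subset_Icc_self hm)
  refine hprim.congr (eqOn_Icc_of_hasDerivWithinAt_of_eqOn_Ioo hab hf hprim fun x hx => ?_)
  have hsub : uIcc m x ⊆ Ioo a b := ordConnected_Ioo.uIcc_subset hm hx
  have hint' : IntervalIntegrable f'' volume m x :=
    hint.mono_set ((hsub.trans Ioo_subset_Icc_self).trans Icc_subset_uIcc)
  rw [intervalIntegral.integral_eq_sub_of_hasDerivAt (fun y hy => hf' y (hsub hy)) hint']
  abel

theorem integral_id_smul_eq_radialFlux_sub (hab : a < b)
    (hf : ∀ x ∈ Icc a b, HasDerivWithinAt f (f' x) (Icc a b) x)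
    (hf' : ∀ x ∈ Ioo a b, HasDerivAt f' (f'' x) x) (hint : IntervalIntegrable f'' volume a b) :
    ∫ x in a..b, x • f'' x = radialFlux f f' b - radialFlux f f' a := by
  have hflux_cont : ContinuousOn (radialFlux f f') (Icc a b) :=
    (continuousOn_id.smul (continuousOn_Icc_of_intervalIntegrable_deriv hab hf hf' hint)).sub
      fun x hx => (hf x hx).continuousWithinAt
  have hflux_deriv : ∀ x ∈ Ioo a b, HasDerivAt (radialFlux f f') (x • f'' x) x := fun x hx => by
    have hfx := (hf x (Ioo_subset_Icc_self hx)).hasDerivAt (Icc_mem_nhds hx.1 hx.2)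
    exact (((hasDerivAt_id x).smul (hf' x hx)).sub hfx).congr_deriv (by simp)
  exact intervalIntegral.integral_eq_sub_of_hasDerivAt_of_le hab.le hflux_cont hflux_deriv
    (hint.continuousOn_smul continuousOn_id)

theorem integral_potential_mul_div_norm {V f f' : ℝ → ℝ} (ha : 0 ≤ a) (hab : a < b)
    (hf : ∀ r ∈ Icc a b, HasDerivWithinAt f (f' r) (Icc a b) r)
    (hf' : ∀ r ∈ Ioo a b, HasDerivAt f' (V r * f r) r)
    (hint : IntervalIntegrable (fun r => V r * f r) volume a b)
    (hV : ∀ r, 0 < r → r ∉ Icc a b → V r = 0) :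
    ∫ z : EuclideanSpace ℝ (Fin 3), V ‖z‖ * (f ‖z‖ / ‖z‖) =
      4 * π * (radialFlux f f' b - radialFlux f f' a) := by
  rw [integral_fun_norm_euclideanSpace_fin_three fun r => V r * (f r / r),
    ← integral_id_smul_eq_radialFlux_sub hab hf hf' hint, smul_eq_mul]
  congr 1
  calc ∫ r in Ioi (0 : ℝ), r ^ 2 • (V r * (f r / r))
      = ∫ r in Ioi (0 : ℝ), r • (V r * f r) := by
        refine setIntegral_congr_fun measurableSet_Ioi fun r (hr : 0 < r) => ?_
        simp only [smul_eq_mul]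
        field_simp
    _ = ∫ r in Ioc a b, r • (V r * f r) := by
        refine setIntegral_eq_of_subset_of_ae_sdiff_eq_zero measurableSet_Ioi.nullMeasurableSet
          (fun r hr => ha.trans_lt hr.1) ?_
        filter_upwards [Measure.ae_ne volume a] with r hra hr
        rw [hV r hr.1 fun h => hr.2 ⟨h.1.lt_of_ne' hra, h.2⟩, zero_mul, smul_zero]
    _ = ∫ r in a..b, r • (V r * f r) := (intervalIntegral.integral_of_le hab.le).symm

end RadialCalculus

namespace ScatteringODE

theorem mu_lt_mu_rpow_beta (S : ScatteringODE) : S.mu < S.mu ^ S.beta := by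
  simpa only [rpow_one] using rpow_lt_rpow_of_exponent_gt S.hmu.1 S.hmu.2 S.hbeta.2

theorem mu_rpow_beta_pos (S : ScatteringODE) : 0 < S.mu ^ S.beta :=
  rpow_pos_of_pos S.hmu.1 _

theorem jt'_eq_one (S : ScatteringODE) {r : ℝ} (hr : S.mu ≤ r) : S.jt' r = 1 := by
  refine (uniqueDiffWithinAt_Ici r).eq_deriv _ (S.hjt_deriv r).hasDerivWithinAt ?_
  exact ((hasDerivAt_id r).sub_const (S.mu * S.a)).hasDerivWithinAt.congr
    (fun x hx => S.hjt_lin x (hr.trans hx)) (S.hjt_lin r hr)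

theorem ft'_eq_mul_jt' (S : ScatteringODE) (κ : ℝ) {r : ℝ} (hr : r ∈ Icc 0 (S.mu ^ S.beta)) :
    S.ft' κ r = κ * S.jt' r := by
  refine (uniqueDiffOn_Icc S.mu_rpow_beta_pos r hr).eq_deriv _
    (S.hft_deriv κ r).hasDerivWithinAt ?_
  exact ((S.hjt_deriv r).const_mul κ).hasDerivWithinAt.congr (S.hft_eq κ) (S.hft_eq κ r hr)

theorem radialFlux_jt_zero (S : ScatteringODE) : radialFlux S.jt S.jt' 0 = 0 := by
  rw [radialFlux, zero_smul, S.hjt_zero, sub_zero]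

theorem radialFlux_jt_of_mu_le (S : ScatteringODE) {r : ℝ} (hr : S.mu ≤ r) :
    radialFlux S.jt S.jt' r = S.mu * S.a := by
  rw [radialFlux, S.jt'_eq_one hr, S.hjt_lin r hr, smul_eq_mul]
  ring

theorem radialFlux_ft (S : ScatteringODE) (κ : ℝ) {r : ℝ} (hr : r ∈ Icc 0 (S.mu ^ S.beta)) :
    radialFlux (S.ft κ) (S.ft' κ) r = κ * radialFlux S.jt S.jt' r := by
  simp only [radialFlux, S.ft'_eq_mul_jt' κ hr, S.hft_eq κ r hr, smul_eq_mul]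
  ring

theorem a_lt_one (S : ScatteringODE) : S.a < 1 := by
  have hval : S.jt S.mu = S.mu * (1 - S.a) := by
    rw [S.hjt_lin S.mu le_rfl, mul_one_sub]
  have hnonneg : 0 ≤ S.mu * (1 - S.a) := hval ▸ S.hjt_nonneg S.mu S.hmu.1.le
  refine (sub_nonneg.1 (nonneg_of_mul_nonneg_right hnonneg S.hmu.1)).lt_of_ne fun ha => ?_
  -- If `a = 1`, then `j̃` attains its minimum `0` at `μ`, where its slope is `1`.
  have hmin : IsLocalMin S.jt S.mu := by
    filter_upwards [lt_mem_nhds S.hmu.1] with r hr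
    rw [hval, ha, sub_self, mul_zero]
    exact S.hjt_nonneg r hr.le
  exact one_ne_zero ((S.jt'_eq_one le_rfl).symm.trans (hmin.hasDerivAt_eq_zero (S.hjt_deriv S.mu)))

theorem norm_half_wmu_mul_jt_le (S : ScatteringODE) {M : ℝ} (hM : ∀ r, S.w r ≤ M) {r : ℝ}
    (hr : r ∈ Ioo 0 S.mu) :
    ‖(1/2) * (S.mu⁻¹ ^ 2 * S.w (r / S.mu)) * S.jt r‖ ≤ (1/2) * (S.mu⁻¹ ^ 2 * M) * S.mu := by
  have hj := S.hjt_nonneg r hr.1.le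
  have hw := S.hw_nonneg (r / S.mu)
  have hM_nonneg : 0 ≤ M := hw.trans (hM _)
  rw [norm_of_nonneg (by positivity)]
  gcongr
  exacts [hM _, (S.hjt_le r hr.1.le).trans hr.2.le]

theorem integral_wmu3_mul_jt_div_norm (S : ScatteringODE) :
    ∫ z : EuclideanSpace ℝ (Fin 3), (1/2) * S.wmu3 z * (S.jt ‖z‖ / ‖z‖) =
      4 * π * (S.mu * S.a) := by
  obtain ⟨M, hM⟩ := S.hw_bdd
  have hint : IntervalIntegrable
      (fun r => (1/2) * (S.mu⁻¹ ^ 2 * S.w (r / S.mu)) * S.jt r) volume 0 S.mu := by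
    rw [intervalIntegrable_iff_integrableOn_Ioo_of_le S.hmu.1.le]
    exact integrableOn_of_hasDerivAt_of_norm_le measurableSet_Ioo measure_Ioo_lt_top S.hjt_ode
      fun r => S.norm_half_wmu_mul_jt_le hM
  have hsupp : ∀ r, 0 < r → r ∉ Icc 0 S.mu → (1/2) * (S.mu⁻¹ ^ 2 * S.w (r / S.mu)) = 0 :=
    fun r hr hr_out => by
      have hr_gt : S.mu < r := not_le.1 fun hle => hr_out ⟨hr.le, hle⟩
      rw [S.hw_supp _ ((one_lt_div S.hmu.1).2 hr_gt), mul_zero, mul_zero]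
  refine (integral_potential_mul_div_norm le_rfl S.hmu.1
    (fun r _ => (S.hjt_deriv r).hasDerivWithinAt) S.hjt_ode hint hsupp).trans ?_
  rw [S.radialFlux_jt_of_mu_le le_rfl, S.radialFlux_jt_zero, sub_zero]

end ScatteringODE

namespace TangentScattering

theorem wmu3_mul_fbeta (S : TangentScattering) (z : EuclideanSpace ℝ (Fin 3)) :
    S.wmu3 z * S.fbeta z = 2 * S.kappa * ((1/2) * S.wmu3 z * (S.jt ‖z‖ / ‖z‖)) := by
  rcases le_or_gt ‖z‖ S.mu with hz | hz
  · have hz' : ‖z‖ ≤ S.mu ^ S.beta := hz.trans S.mu_lt_mu_rpow_beta.le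
    rw [fbeta, fext, if_pos (hz'.trans_lt S.hRb), S.hft_eq S.kappa _ ⟨norm_nonneg z, hz'⟩]
    ring
  · simp only [ScatteringODE.wmu3, S.hw_supp _ ((one_lt_div S.hmu.1).2 hz), mul_zero, zero_mul]

theorem integral_wmu3_mul_fbeta (S : TangentScattering) :
    ∫ z, S.wmu3 z * S.fbeta z = 8 * π * S.a * S.kappa * S.mu := by
  simp_rw [wmu3_mul_fbeta]
  rw [integral_const_mul, S.integral_wmu3_mul_jt_div_norm]
  ring

theorem radialFlux_ft_kappa_Rb (S : TangentScattering) :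
    radialFlux (S.ft S.kappa) (S.ft' S.kappa) S.Rb = 0 := by
  rw [radialFlux, S.htan_val, S.htan_der, smul_eq_mul, mul_one, sub_self]

theorem radialFlux_ft_kappa_mu_rpow_beta (S : TangentScattering) :
    radialFlux (S.ft S.kappa) (S.ft' S.kappa) (S.mu ^ S.beta) = S.kappa * (S.mu * S.a) := by
  rw [S.radialFlux_ft S.kappa (right_mem_Icc.2 S.mu_rpow_beta_pos.le),
    S.radialFlux_jt_of_mu_le S.mu_lt_mu_rpow_beta.le]

/-- The radial potential `-U_β / 2`, for which the equation of `f̃` reads `f̃'' = V f̃` on the whole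
interval `(μ^β̃, R_β)`. -/
noncomputable def shellPotential (S : TangentScattering) : ℝ → ℝ :=
  (Ioo (S.mu ^ S.beta) S.Rb).indicator fun _ => -(1/2) * S.a * S.mu ^ (1 - 3 * S.beta)

theorem Ub_mul_fbeta (S : TangentScattering) (z : EuclideanSpace ℝ (Fin 3)) :
    S.Ub z * S.fbeta z = -2 * (S.shellPotential ‖z‖ * (S.ft S.kappa ‖z‖ / ‖z‖)) := by
  by_cases hz : S.mu ^ S.beta < ‖z‖ ∧ ‖z‖ < S.Rb
  · rw [Ub, if_pos hz, fbeta, fext, if_pos hz.2, shellPotential, indicator_of_mem (mem_Ioo.2 hz)]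
    ring
  · rw [Ub, if_neg hz, shellPotential, indicator_of_notMem (mem_Ioo.not.2 hz), zero_mul, zero_mul,
      mul_zero]

theorem intervalIntegrable_shellPotential_mul_ft (S : TangentScattering) :
    IntervalIntegrable (fun r => S.shellPotential r * S.ft S.kappa r) volume
      (S.mu ^ S.beta) S.Rb := by
  have hcont : Continuous (S.ft S.kappa) :=
    continuous_iff_continuousAt.2 fun r => (S.hft_deriv S.kappa r).continuousAt
  have hpot : IntervalIntegrable S.shellPotential volume (S.mu ^ S.beta) S.Rb := by
    rw [intervalIntegrable_iff_integrableOn_Ioo_of_le S.hRb.le]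
    exact (integrableOn_const measure_Ioo_lt_top.ne).indicator measurableSet_Ioo
  exact hpot.mul_continuousOn hcont.continuousOn

theorem integral_Ub_mul_fbeta (S : TangentScattering) :
    ∫ z, S.Ub z * S.fbeta z = 8 * π * S.a * S.kappa * S.mu := by
  have hode : ∀ r ∈ Ioo (S.mu ^ S.beta) S.Rb,
      HasDerivAt (S.ft' S.kappa) (S.shellPotential r * S.ft S.kappa r) r := fun r hr => by
    rw [shellPotential, indicator_of_mem hr]
    exact S.hft_ode S.kappa r hr.1
  have hsupp : ∀ r, 0 < r → r ∉ Icc (S.mu ^ S.beta) S.Rb → S.shellPotential r = 0 :=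
    fun r _ hr => indicator_of_notMem (fun h => hr (Ioo_subset_Icc_self h)) _
  simp_rw [Ub_mul_fbeta]
  rw [integral_const_mul, integral_potential_mul_div_norm S.mu_rpow_beta_pos.le S.hRb
    (fun r _ => (S.hft_deriv S.kappa r).hasDerivWithinAt) hode
    S.intervalIntegrable_shellPotential_mul_ft hsupp, S.radialFlux_ft_kappa_Rb,
    S.radialFlux_ft_kappa_mu_rpow_beta]
  ring

theorem integral_wmu3_sub_Ub_mul_fbeta (S : TangentScattering) :
    ∫ z, (S.wmu3 z - S.Ub z) * S.fbeta z = 0 := by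
  have hne : 8 * π * S.a * S.kappa * S.mu ≠ 0 := by
    have := S.ha
    have := S.hmu.1
    have := zero_lt_one.trans S.hkappa.1
    positivity
  have hw : Integrable fun z => S.wmu3 z * S.fbeta z :=
    .of_integral_ne_zero (S.integral_wmu3_mul_fbeta.trans_ne hne)
  have hU : Integrable fun z => S.Ub z * S.fbeta z :=
    .of_integral_ne_zero (S.integral_Ub_mul_fbeta.trans_ne hne)
  simp_rw [sub_mul]
  rw [integral_sub hw hU, S.integral_wmu3_mul_fbeta, S.integral_Ub_mul_fbeta, sub_self]

theorem kappa_sub_one_le (S : TangentScattering) :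
    S.kappa - 1 ≤ S.a / (1 - S.a) * S.mu ^ (1 - S.beta) := by
  have hmu := S.hmu.1
  have ha := S.ha
  have ha_compl : 0 < 1 - S.a := sub_pos.2 S.a_lt_one
  have hden : 0 < S.mu ^ S.beta - S.mu * S.a := sub_pos.2 S.hsmall
  calc S.kappa - 1 ≤ S.mu ^ S.beta / (S.mu ^ S.beta - S.mu * S.a) - 1 :=
        sub_le_sub_right S.hkappa.2.le 1
    _ = S.mu * S.a / (S.mu ^ S.beta - S.mu * S.a) := by
        field_simp
        ring
    _ ≤ S.mu * S.a / (S.mu ^ S.beta * (1 - S.a)) := by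
        rw [mul_one_sub]
        gcongr
        · rw [← mul_one_sub]
          positivity
        · exact S.mu_lt_mu_rpow_beta.le
    _ = S.a / (1 - S.a) * S.mu ^ (1 - S.beta) := by
        rw [rpow_sub hmu, rpow_one]
        field_simp

theorem abs_integral_Ub_mul_fbeta_sub_le (S : TangentScattering) :
    |S.mu⁻¹ * (∫ z, S.Ub z * S.fbeta z) - 8 * π * S.a| ≤
      8 * π * S.a ^ 2 / (1 - S.a) * S.mu ^ (1 - S.beta) := by
  have hmu := S.hmu.1
  have ha := S.ha
  have hkappa : 0 ≤ S.kappa - 1 := sub_nonneg.2 S.hkappa.1.le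
  calc |S.mu⁻¹ * (∫ z, S.Ub z * S.fbeta z) - 8 * π * S.a|
      = |8 * π * S.a * (S.kappa - 1)| := by
        rw [S.integral_Ub_mul_fbeta]
        congr 1
        field_simp
    _ = 8 * π * S.a * (S.kappa - 1) := abs_of_nonneg (by positivity)
    _ ≤ 8 * π * S.a * (S.a / (1 - S.a) * S.mu ^ (1 - S.beta)) := by
        gcongr
        exact S.kappa_sub_one_le
    _ = 8 * π * S.a ^ 2 / (1 - S.a) * S.mu ^ (1 - S.beta) := by ring

end TangentScattering

theorem scattering_length_identities_general (S : TangentScattering) :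
    ((∫ z : EuclideanSpace ℝ (Fin 3), (S.wmu3 z - S.Ub z) * S.fbeta z) = 0 ∧
      (∫ z : EuclideanSpace ℝ (Fin 3), S.wmu3 z * S.fbeta z) = 8 * π * S.a * S.kappa * S.mu ∧
      (∫ z : EuclideanSpace ℝ (Fin 3), S.Ub z * S.fbeta z) = 8 * π * S.a * S.kappa * S.mu) ∧
    |S.mu⁻¹ * (∫ z : EuclideanSpace ℝ (Fin 3), S.Ub z * S.fbeta z) - 8 * π * S.a| ≤
      8 * π * S.a ^ 2 / (1 - S.a) * S.mu ^ (1 - S.beta) :=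
  ⟨⟨S.integral_wmu3_sub_Ub_mul_fbeta, S.integral_wmu3_mul_fbeta, S.integral_Ub_mul_fbeta⟩,
    S.abs_integral_Ub_mul_fbeta_sub_le⟩

/-- (i) `∫ (w_μ - U_β) f_β = 0`; (ii) `∫ w_μ f_β = ∫ U_β f_β = 8π a κ_β μ`; (iii) for `μ`
sufficiently small, `|μ⁻¹ ∫ U_β f_β - 8π a| ≤ C μ^(1-β̃)` with `C` depending only on `a`. -/
theorem scattering_length_identities (a : ℝ) (ha : 0 < a) :
    ∃ C > (0:ℝ), ∃ μ₀ > (0:ℝ),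
      ∀ S : TangentScattering, S.a = a →
        ((∫ z : EuclideanSpace ℝ (Fin 3), (S.wmu3 z - S.Ub z) * S.fbeta z) = 0 ∧
          (∫ z : EuclideanSpace ℝ (Fin 3), S.wmu3 z * S.fbeta z) = 8 * π * a * S.kappa * S.mu ∧
          (∫ z : EuclideanSpace ℝ (Fin 3), S.Ub z * S.fbeta z) = 8 * π * a * S.kappa * S.mu) ∧
        (S.mu ≤ μ₀ →
          |S.mu⁻¹ * (∫ z : EuclideanSpace ℝ (Fin 3), S.Ub z * S.fbeta z) - 8 * π * a| ≤
            C * S.mu ^ (1 - S.beta)) := by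
  refine ⟨max 1 (8 * π * a ^ 2 / (1 - a)), by positivity, 1, one_pos, ?_⟩
  rintro S rfl
  exact (scattering_length_identities_general S).imp_right fun hbound _ => hbound.trans
    (mul_le_mul_of_nonneg_right (le_max_right _ _) (rpow_nonneg S.hmu.1.le _))
end

section
/- For every integer N ≥ 2 and every ψ ∈ C_c^∞((ℝ³)^N; ℂ) the quadratic form inequality holds: ∫ 1_{{|z₁ − z₂| < R_β}} |∇_{z₁} ψ|² dz + ½ ∫ (w_μ − U_β)(z₁ − z₂) |ψ(z)|² dz ≥ 0. -/
open Set MeasureTheory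

/-!
Where `f̃ > 0`, the function `h = r² (log (f̃ / r))'` satisfies the Riccati inequality
`h' ≤ r² V - h² / r²` with `V = ½ (w_μ - U_β)`, so that for `u` along a ray the integrand
`r² (|u'|² + V |u|²)` dominates `(h |u|²)'`. Now `h` vanishes at `0`, and it vanishes at `R_β`
because `f̃` is tangent there to the line `r ↦ r`: the radial energy over `(0, R_β)` is nonnegative.
Polar coordinates around `z₂` and Fubini turn this into the claim.

Positivity of `f̃` is where small `μ` enters. Conservation of energy for the oscillator beyond
`μ^β̃` bounds its phase at the tangency radius, and over so short a phase `f̃'` stays positive.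
-/

open Filter Topology

section SecondOrderODE

lemma continuousOn_Icc_of_hasDerivAt_of_abs_le {g g' g'' : ℝ → ℝ} {α β K : ℝ} (hαβ : α < β)
    (hg : ∀ r ∈ Icc α β, HasDerivWithinAt g (g' r) (Icc α β) r)
    (hg' : ∀ r ∈ Ioo α β, HasDerivAt g' (g'' r) r) (hK : ∀ r ∈ Ioo α β, |g'' r| ≤ K) :
    ContinuousOn g' (Icc α β) := by
  have hlip : LipschitzOnWith K.toNNReal g' (Ioo α β) := by
    refine (convex_Ioo α β).lipschitzOnWith_of_nnnorm_hasDerivWithin_le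
      (fun x hx => (hg' x hx).hasDerivWithinAt) fun x hx => ?_
    rw [← NNReal.coe_le_coe, coe_nnnorm, Real.norm_eq_abs]
    exact (hK x hx).trans (Real.le_coe_toNNReal K)
  obtain ⟨h, hhlip, hgh⟩ := hlip.extend_real
  have hprim : ∀ x ∈ Icc α β, g x = g α + ∫ t in α..x, h t := fun x hx => by
    rw [intervalIntegral.integral_eq_sub_of_hasDerivAt_of_le hx.1 (f := g) ?_ ?_
      (hhlip.continuous.intervalIntegrable _ _), add_sub_cancel]
    · exact fun y hy =>
        ((hg y ⟨hy.1, hy.2.trans hx.2⟩).mono (Icc_subset_Icc_right hx.2)).continuousWithinAt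
    · intro y hy
      have hy' : y ∈ Ioo α β := ⟨hy.1, hy.2.trans_le hx.2⟩
      rw [← hgh hy']
      exact (hg y (Ioo_subset_Icc_self hy')).hasDerivAt (Icc_mem_nhds hy'.1 hy'.2)
  refine hhlip.continuous.continuousOn.congr fun x hx => ?_
  have hderiv : HasDerivWithinAt (fun y => g α + ∫ t in α..y, h t) (h x) (Icc α β) x :=
    ((hhlip.continuous.integral_hasStrictDerivAt α x).hasDerivAt.const_add _).hasDerivWithinAt
  exact (uniqueDiffOn_Icc hαβ x hx).eq_deriv _ (hg x hx) (hderiv.congr hprim (hprim x hx))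

variable {f f' v : ℝ → ℝ} {a b M q : ℝ}

lemma monotoneOn_deriv_of_hasDerivAt_mul (hf' : ContinuousOn f' (Icc a b))
    (hode : ∀ r ∈ Ioo a b, HasDerivAt f' (v r * f r) r) (hv : ∀ r ∈ Ioo a b, 0 ≤ v r)
    (hf : ∀ r ∈ Ioo a b, 0 ≤ f r) : MonotoneOn f' (Icc a b) := by
  refine monotoneOn_of_hasDerivWithinAt_nonneg (f' := fun r => v r * f r) (convex_Icc a b) hf'
    ?_ ?_ <;> rw [interior_Icc]
  · exact fun r hr => (hode r hr).hasDerivWithinAt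
  · exact fun r hr => mul_nonneg (hv r hr) (hf r hr)

lemma le_sub_mul_deriv_of_monotoneOn (hfc : ContinuousOn f (Icc a b))
    (hf : ∀ r ∈ Ioo a b, HasDerivAt f (f' r) r) (hmono : MonotoneOn f' (Icc a b)) (hfa : f a = 0)
    {r : ℝ} (hr : r ∈ Ioo a b) : f r ≤ (r - a) * f' r := by
  obtain ⟨s, hs, hslope⟩ := exists_hasDerivAt_eq_slope f f' hr.1
    (hfc.mono (Icc_subset_Icc_right hr.2.le)) fun s hs => hf s ⟨hs.1, hs.2.trans hr.2⟩
  have hpos : 0 < r - a := sub_pos.2 hr.1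
  rw [hfa, sub_zero, eq_div_iff hpos.ne'] at hslope
  rw [← hslope, mul_comm]
  gcongr
  exact hmono ⟨hs.1.le, (hs.2.trans hr.2).le⟩ ⟨hr.1.le, hr.2.le⟩ hs.2.le

/-- Convexity gives `f r ≤ (r - a) f' r`, which turns the second order equation into the first order
inequality `f'' ≤ M (b - a) f'`. -/
lemma exp_neg_mul_deriv_le (hab : a ≤ b) (hfc : ContinuousOn f (Icc a b))
    (hf : ∀ r ∈ Ioo a b, HasDerivAt f (f' r) r) (hf'c : ContinuousOn f' (Icc a b))
    (hode : ∀ r ∈ Ioo a b, HasDerivAt f' (v r * f r) r) (hv : ∀ r ∈ Ioo a b, v r ∈ Icc 0 M)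
    (hnonneg : ∀ r ∈ Ioo a b, 0 ≤ f r) (hfa : f a = 0) :
    Real.exp (-(M * (b - a)) * (b - a)) * f' b ≤ f' a := by
  have hmono := monotoneOn_deriv_of_hasDerivAt_mul hf'c hode (fun r hr => (hv r hr).1) hnonneg
  have hanti : AntitoneOn (fun r => Real.exp (-(M * (b - a)) * (r - a)) * f' r) (Icc a b) := by
    refine antitoneOn_of_hasDerivWithinAt_nonpos (convex_Icc a b)
      (f' := fun r => Real.exp (-(M * (b - a)) * (r - a)) * (v r * f r - M * (b - a) * f' r))
      ((by fun_prop : Continuous _).continuousOn.mul hf'c) ?_ ?_ <;> rw [interior_Icc] <;>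
      intro r hr
    · have hexp : HasDerivAt (fun r => Real.exp (-(M * (b - a)) * (r - a)))
          (Real.exp (-(M * (b - a)) * (r - a)) * -(M * (b - a))) r := by
        simpa using (((hasDerivAt_id r).sub_const a).const_mul (-(M * (b - a)))).exp
      exact ((hexp.mul (hode r hr)).congr_deriv (by ring)).hasDerivWithinAt
    · have hle := le_sub_mul_deriv_of_monotoneOn hfc hf hmono hfa hr
      have hf'r : 0 ≤ f' r := nonneg_of_mul_nonneg_right ((hnonneg r hr).trans hle) (sub_pos.2 hr.1)
      have hM : 0 ≤ M := (hv r hr).1.trans (hv r hr).2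
      refine mul_nonpos_of_nonneg_of_nonpos (Real.exp_nonneg _) (sub_nonpos.2 ?_)
      calc v r * f r ≤ M * ((b - a) * f' r) := by
            gcongr
            · exact hnonneg r hr
            · exact (hv r hr).2
            · exact hle.trans (by gcongr; exact hr.2.le)
        _ = M * (b - a) * f' r := by ring
  simpa using hanti (left_mem_Icc.2 hab) (right_mem_Icc.2 hab) hab

lemma oscillator_energy_eq (hfc : ContinuousOn f (Icc a b))
    (hf : ∀ r ∈ Ioo a b, HasDerivAt f (f' r) r) (hf'c : ContinuousOn f' (Icc a b))
    (hode : ∀ r ∈ Ioo a b, HasDerivAt f' (-q * f r) r) {r : ℝ} (hr : r ∈ Icc a b) :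
    f' r ^ 2 + q * f r ^ 2 = f' a ^ 2 + q * f a ^ 2 := by
  rcases hr.1.eq_or_lt with rfl | har
  · rfl
  obtain ⟨s, -, hslope⟩ := exists_hasDerivAt_eq_slope (fun s => f' s ^ 2 + q * f s ^ 2)
    (fun _ => 0) har
    (((hf'c.pow 2).add (continuousOn_const.mul (hfc.pow 2))).mono (Icc_subset_Icc_right hr.2))
    fun s hs => by
      have hs' : s ∈ Ioo a b := ⟨hs.1, hs.2.trans_le hr.2⟩
      refine (((hode s hs').fun_pow 2).add (((hf s hs').fun_pow 2).const_mul q)).congr_deriv ?_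
      norm_num
      ring
  rw [eq_div_iff (sub_pos.2 har).ne', zero_mul] at hslope
  exact sub_eq_zero.1 hslope.symm

lemma oscillator_sq_deriv_sub_le (hq : 0 ≤ q) (hfc : ContinuousOn f (Icc a b))
    (hf : ∀ r ∈ Ioo a b, HasDerivAt f (f' r) r) (hf'c : ContinuousOn f' (Icc a b))
    (hode : ∀ r ∈ Ioo a b, HasDerivAt f' (-q * f r) r) {r : ℝ} (hr : r ∈ Icc a b) :
    (f' r - f' a) ^ 2 ≤ q * (r - a) ^ 2 * (f' a ^ 2 + q * f a ^ 2) := by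
  rcases hr.1.eq_or_lt with rfl | har
  · simp
  obtain ⟨s, hs, hslope⟩ := exists_hasDerivAt_eq_slope f' (fun s => -q * f s) har
    (hf'c.mono (Icc_subset_Icc_right hr.2)) fun s hs => hode s ⟨hs.1, hs.2.trans_le hr.2⟩
  rw [eq_div_iff (sub_pos.2 har).ne'] at hslope
  have henergy := oscillator_energy_eq hfc hf hf'c hode ⟨hs.1.le, hs.2.le.trans hr.2⟩
  calc (f' r - f' a) ^ 2 = q * (r - a) ^ 2 * (q * f s ^ 2) := by rw [← hslope]; ring
    _ ≤ q * (r - a) ^ 2 * (f' a ^ 2 + q * f a ^ 2) := by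
        gcongr
        exact henergy ▸ le_add_of_nonneg_left (sq_nonneg _)

end SecondOrderODE

section RadialEnergy

variable {F : Type*} [NormedAddCommGroup F] [InnerProductSpace ℝ F]

/-- Completing the square in `(h ‖u‖²)' = h' ‖u‖² + 2 h ⟪u, u'⟫` for a solution `h` of the Riccati
inequality. -/
lemma deriv_mul_norm_sq_le_of_riccati {η h ρ V : ℝ} (hρ : 0 < ρ)
    (hη : η ≤ ρ * V - h ^ 2 / ρ) (x y : F) :
    η * ‖x‖ ^ 2 + h * (2 * inner ℝ x y) ≤ ρ * (‖y‖ ^ 2 + V * ‖x‖ ^ 2) := by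
  have hsq : 0 ≤ ρ * ‖y - (h / ρ) • x‖ ^ 2 := by positivity
  have hexpand : ρ * ‖y - (h / ρ) • x‖ ^ 2
      = ρ * ‖y‖ ^ 2 - h * (2 * inner ℝ x y) + h ^ 2 / ρ * ‖x‖ ^ 2 := by
    rw [norm_sub_sq_real, inner_smul_right, norm_smul, mul_pow, Real.norm_eq_abs, sq_abs,
      real_inner_comm]
    field_simp
  have hmul := mul_le_mul_of_nonneg_right hη (sq_nonneg ‖x‖)
  linarith

lemma sub_le_integral_of_riccati {h η ρ V φ : ℝ → ℝ} {u u' : ℝ → F} {a b : ℝ} (hab : a ≤ b)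
    (hh : ContinuousOn h (Icc a b)) (hη : ∀ r ∈ Ioo a b, HasDerivWithinAt h (η r) (Ioi r) r)
    (hρ : ∀ r ∈ Ioo a b, 0 < ρ r) (hric : ∀ r ∈ Ioo a b, η r ≤ ρ r * V r - h r ^ 2 / ρ r)
    (hu : ContinuousOn u (Icc a b)) (hu' : ∀ r ∈ Ioo a b, HasDerivAt u (u' r) r)
    (hφ : IntegrableOn φ (Icc a b))
    (hle : ∀ r ∈ Ioo a b, ρ r * (‖u' r‖ ^ 2 + V r * ‖u r‖ ^ 2) ≤ φ r) :
    h b * ‖u b‖ ^ 2 - h a * ‖u a‖ ^ 2 ≤ ∫ r in a..b, φ r :=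
  intervalIntegral.sub_le_integral_of_hasDeriv_right_of_le hab (hh.mul (hu.norm.pow 2))
    (fun r hr => (hη r hr).mul (hu' r hr).norm_sq.hasDerivWithinAt) hφ fun r hr =>
      (deriv_mul_norm_sq_le_of_riccati (hρ r hr) (hric r hr) _ _).trans (hle r hr)

end RadialEnergy

/-- `f`, with derivative `f'`, is a positive supersolution of the zero-energy radial scattering
equation `f'' = V f` on `(0, R)` in three dimensions (so that `f r / r` is the radial wave
function), tangent to the line `r ↦ r` at `R`. The equation is imposed on the right derivative
of `f'`, since `V` may jump, and positivity is quantitative at the origin, where `f` vanishes. -/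
structure IsTangentSupersolution (V f f' : ℝ → ℝ) (R : ℝ) : Prop where
  pos : 0 < R
  continuousOn : ContinuousOn f (Icc 0 R)
  hasDerivAt : ∀ r ∈ Ioo 0 R, HasDerivAt f (f' r) r
  continuousOn_deriv : ContinuousOn f' (Icc 0 R)
  exists_hasDerivWithinAt_deriv_le :
    ∀ r ∈ Ioo 0 R, ∃ f'', HasDerivWithinAt f' f'' (Ioi r) r ∧ f'' ≤ V r * f r
  exists_mul_le : ∃ c > 0, ∀ r ∈ Icc 0 R, c * r ≤ f r
  apply_eq : f R = R
  deriv_eq : f' R = 1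

/-- The function `r² g' / g` for `g r = f r / r`. It solves a Riccati inequality when `f` is a
supersolution, and it vanishes at the point of tangency. At `r = 0` its value is `0`, which is its
limit when `f` has positive slope there. -/
noncomputable def weightedLogDeriv (f f' : ℝ → ℝ) (r : ℝ) : ℝ := r ^ 2 * f' r / f r - r

namespace IsTangentSupersolution

variable {V f f' : ℝ → ℝ} {R : ℝ}

lemma apply_pos (hf : IsTangentSupersolution V f f' R) {r : ℝ} (hr : r ∈ Ioc 0 R) : 0 < f r := by
  obtain ⟨c, hc, hcf⟩ := hf.exists_mul_le
  exact (mul_pos hc hr.1).trans_le (hcf r ⟨hr.1.le, hr.2⟩)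

lemma exists_norm_weightedLogDeriv_le (hf : IsTangentSupersolution V f f' R) :
    ∃ C, ∀ r ∈ Icc 0 R, ‖weightedLogDeriv f f' r‖ ≤ C * r := by
  obtain ⟨c, hc, hcf⟩ := hf.exists_mul_le
  obtain ⟨C, hC⟩ := isCompact_Icc.exists_bound_of_continuousOn hf.continuousOn_deriv
  refine ⟨C / c + 1, fun r hr => ?_⟩
  rcases hr.1.eq_or_lt with rfl | h0
  · simp [weightedLogDeriv]
  have hfr := hf.apply_pos ⟨h0, hr.2⟩
  have hC0 : 0 ≤ C := (norm_nonneg _).trans (hC r hr)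
  have hquot : ‖r ^ 2 * f' r / f r‖ ≤ C / c * r := by
    rw [norm_div, norm_mul, Real.norm_of_nonneg hfr.le, Real.norm_of_nonneg (sq_nonneg r),
      div_le_iff₀ hfr]
    calc r ^ 2 * ‖f' r‖ ≤ r ^ 2 * C := by gcongr; exact hC r hr
      _ = C / c * r * (c * r) := by field_simp
      _ ≤ C / c * r * f r := by gcongr; exact hcf r hr
  calc ‖weightedLogDeriv f f' r‖ ≤ ‖r ^ 2 * f' r / f r‖ + ‖r‖ := norm_sub_le _ _
    _ ≤ (C / c + 1) * r := by rw [Real.norm_of_nonneg h0.le, add_mul, one_mul]; gcongr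

lemma continuousOn_weightedLogDeriv (hf : IsTangentSupersolution V f f' R) :
    ContinuousOn (weightedLogDeriv f f') (Icc 0 R) := by
  intro r hr
  rcases hr.1.eq_or_lt with rfl | h0
  · obtain ⟨C, hC⟩ := hf.exists_norm_weightedLogDeriv_le
    have hlim : Tendsto (fun r : ℝ => C * r) (𝓝[Icc 0 R] 0) (𝓝 0) := by
      simpa using ((continuous_const_mul C).tendsto 0).mono_left nhdsWithin_le_nhds
    have hzero : weightedLogDeriv f f' 0 = 0 := by simp [weightedLogDeriv]
    rw [ContinuousWithinAt, hzero]
    exact squeeze_zero_norm' (eventually_mem_nhdsWithin.mono hC) hlim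
  · exact (((continuousWithinAt_id.pow 2).mul (hf.continuousOn_deriv r hr)).div
      (hf.continuousOn r hr) (hf.apply_pos ⟨h0, hr.2⟩).ne').sub continuousWithinAt_id

lemma exists_hasDerivWithinAt_weightedLogDeriv_le (hf : IsTangentSupersolution V f f' R) {r : ℝ}
    (hr : r ∈ Ioo 0 R) :
    ∃ η, HasDerivWithinAt (weightedLogDeriv f f') η (Ioi r) r ∧
      η ≤ r ^ 2 * V r - weightedLogDeriv f f' r ^ 2 / r ^ 2 := by
  obtain ⟨f'', hf'', hle⟩ := hf.exists_hasDerivWithinAt_deriv_le r hr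
  have hfr := hf.apply_pos (Ioo_subset_Ioc_self hr)
  have hr0 := hr.1
  have hsq : HasDerivWithinAt (fun r : ℝ => r ^ 2) (2 * r) (Ioi r) r := by
    simpa using (hasDerivAt_pow 2 r).hasDerivWithinAt
  refine ⟨_, ((hsq.mul hf'').div (hf.hasDerivAt r hr).hasDerivWithinAt hfr.ne').sub
    (hasDerivWithinAt_id _ _), ?_⟩
  calc ((2 * r * f' r + r ^ 2 * f'') * f r - r ^ 2 * f' r * f' r) / f r ^ 2 - 1
      = r ^ 2 * (f'' / f r) - weightedLogDeriv f f' r ^ 2 / r ^ 2 := by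
        rw [weightedLogDeriv]; field_simp; ring
    _ ≤ r ^ 2 * V r - weightedLogDeriv f f' r ^ 2 / r ^ 2 := by
        gcongr
        exact (div_le_iff₀ hfr).2 hle

lemma weightedLogDeriv_eq_zero (hf : IsTangentSupersolution V f f' R) :
    weightedLogDeriv f f' R = 0 := by
  have := hf.pos.ne'
  rw [weightedLogDeriv, hf.apply_eq, hf.deriv_eq]
  field_simp
  ring

lemma integral_radial_energy_nonneg {F : Type*} [NormedAddCommGroup F] [InnerProductSpace ℝ F]
    (hf : IsTangentSupersolution V f f' R) {u u' : ℝ → F} {φ : ℝ → ℝ}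
    (hu : ContinuousOn u (Icc 0 R)) (hu' : ∀ r ∈ Ioo 0 R, HasDerivAt u (u' r) r)
    (hφ : IntegrableOn φ (Icc 0 R))
    (hle : ∀ r ∈ Ioo 0 R, r ^ 2 * (‖u' r‖ ^ 2 + V r * ‖u r‖ ^ 2) ≤ φ r) :
    0 ≤ ∫ r in (0)..R, φ r := by
  choose! η hη hric using fun r (hr : r ∈ Ioo 0 R) =>
    hf.exists_hasDerivWithinAt_weightedLogDeriv_le hr
  have h := sub_le_integral_of_riccati hf.pos.le hf.continuousOn_weightedLogDeriv hη
    (fun r hr => pow_pos hr.1 2) hric hu hu' hφ hle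
  have hzero : weightedLogDeriv f f' 0 = 0 := by simp [weightedLogDeriv]
  simpa [hf.weightedLogDeriv_eq_zero, hzero] using h

end IsTangentSupersolution

section PolarCoordinates

variable {E F : Type*} [NormedAddCommGroup E] [NormedSpace ℝ E] [FiniteDimensional ℝ E]
  [MeasurableSpace E] [BorelSpace E] (μ : Measure E) [μ.IsAddHaarMeasure]
  [NormedAddCommGroup F] [NormedSpace ℝ F]

lemma integral_volumeIoiPow (n : ℕ) (g : ℝ → F) :
    ∫ r : Ioi (0 : ℝ), g r ∂(.volumeIoiPow n) = ∫ r in Ioi (0 : ℝ), r ^ n • g r := by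
  simp only [Measure.volumeIoiPow, ENNReal.ofReal]
  rw [integral_withDensity_eq_integral_smul ((measurable_subtype_coe.pow_const _).real_toNNReal),
    integral_subtype_comap measurableSet_Ioi fun r : ℝ => (r ^ n).toNNReal • g r]
  refine setIntegral_congr_fun measurableSet_Ioi fun r hr => ?_
  simp only [NNReal.smul_def, Real.coe_toNNReal _ (pow_nonneg (le_of_lt hr) n)]

lemma integral_eq_integral_toSphere_integral_Ioi [Nontrivial E] {f : E → F}
    (hf : Integrable f μ) :
    ∫ x, f x ∂μ = ∫ ω : Metric.sphere (0 : E) 1,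
      (∫ r in Ioi (0 : ℝ), r ^ (Module.finrank ℝ E - 1) • f (r • ω.1)) ∂μ.toSphere := by
  have hpres := μ.measurePreserving_homeomorphUnitSphereProd
  have hemb := (homeomorphUnitSphereProd E).measurableEmbedding
  have hcompl := (measurableSet_singleton (0 : E)).compl
  set g : Metric.sphere (0 : E) 1 × Ioi (0 : ℝ) → F := fun p => f (p.2.1 • p.1.1)
  have hcomp : g ∘ homeomorphUnitSphereProd E = f ∘ Subtype.val := by
    ext x
    exact congrArg (f ∘ Subtype.val) ((homeomorphUnitSphereProd E).symm_apply_apply x)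
  have hgint : Integrable g (μ.toSphere.prod (.volumeIoiPow (Module.finrank ℝ E - 1))) := by
    rw [← hpres.integrable_comp_emb hemb, hcomp, ← integrableOn_iff_comap_subtypeVal hcompl]
    exact hf.integrableOn
  calc ∫ x, f x ∂μ = ∫ x : ({0}ᶜ : Set E), g (homeomorphUnitSphereProd E x) ∂(μ.comap (↑)) := by
        rw [← Function.comp_def g, hcomp, Function.comp_def, integral_subtype_comap hcompl,
          restrict_compl_singleton]
    _ = ∫ p, g p ∂μ.toSphere.prod (.volumeIoiPow (Module.finrank ℝ E - 1)) :=
        hpres.integral_comp hemb g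
    _ = _ := by
        rw [integral_prod _ hgint]
        exact integral_congr_ae (.of_forall fun ω => integral_volumeIoiPow _ fun r => f (r • ω.1))

lemma setIntegral_ball_nonneg_of_forall_radial [Nontrivial E] {f : E → ℝ} {R : ℝ} (hR : 0 ≤ R)
    (hf : ∀ ω : E, ‖ω‖ = 1 →
      0 ≤ ∫ r in (0)..R, r ^ (Module.finrank ℝ E - 1) * f (r • ω)) :
    0 ≤ ∫ x in Metric.ball 0 R, f x ∂μ := by
  rw [← integral_indicator Metric.isOpen_ball.measurableSet]
  by_cases hint : Integrable ((Metric.ball 0 R).indicator f) μ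
  swap
  · rw [integral_undef hint]
  rw [integral_eq_integral_toSphere_integral_Ioi μ hint]
  refine integral_nonneg fun ω => ?_
  have hω : ‖ω.1‖ = 1 := norm_eq_of_mem_sphere ω
  have hind : ∀ r ∈ Ioi (0 : ℝ), r ^ (Module.finrank ℝ E - 1) •
      (Metric.ball 0 R).indicator f (r • ω.1) =
        (Iio R).indicator (fun r => r ^ (Module.finrank ℝ E - 1) * f (r • ω.1)) r := by
    intro r hr
    simp [indicator, norm_smul, hω, abs_of_pos (mem_Ioi.1 hr)]
  refine (hf ω hω).trans_eq ?_
  rw [setIntegral_congr_fun measurableSet_Ioi hind, setIntegral_indicator measurableSet_Iio,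
    Ioi_inter_Iio, intervalIntegral.integral_of_le hR, integral_Ioc_eq_integral_Ioo]

end PolarCoordinates

lemma norm_sq_map_le_mul_sum_orthonormalBasis {ι E F : Type*} [Fintype ι] [NormedAddCommGroup E]
    [InnerProductSpace ℝ E] [SeminormedAddCommGroup F] [NormedSpace ℝ F]
    (b : OrthonormalBasis ι ℝ E) (L : E →ₗ[ℝ] F) (v : E) :
    ‖L v‖ ^ 2 ≤ ‖v‖ ^ 2 * ∑ k, ‖L (b k)‖ ^ 2 := by
  calc ‖L v‖ ^ 2 = ‖∑ k, inner ℝ (b k) v • L (b k)‖ ^ 2 := by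
        conv_lhs => rw [← b.sum_repr' v, map_sum]
        simp only [map_smul]
    _ ≤ (∑ k, ‖inner ℝ (b k) v‖ * ‖L (b k)‖) ^ 2 := by
        gcongr
        exact (norm_sum_le _ _).trans_eq (by simp only [norm_smul])
    _ ≤ (∑ k, ‖inner ℝ (b k) v‖ ^ 2) * ∑ k, ‖L (b k)‖ ^ 2 :=
        Finset.sum_mul_sq_le_sq_mul_sq _ _ _
    _ = ‖v‖ ^ 2 * ∑ k, ‖L (b k)‖ ^ 2 := by rw [b.sum_sq_norm_inner_right]

namespace IsTangentSupersolution

variable {V f f' : ℝ → ℝ} {R : ℝ}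

lemma integral_ball_energy_nonneg {E F : Type*} [NormedAddCommGroup E] [NormedSpace ℝ E]
    [FiniteDimensional ℝ E] [MeasurableSpace E] [BorelSpace E] (μ : Measure E) [μ.IsAddHaarMeasure]
    [NormedAddCommGroup F] [InnerProductSpace ℝ F] (hf : IsTangentSupersolution V f f' R)
    (hE : Module.finrank ℝ E = 3) {φ : E → F} (hφ : Differentiable ℝ φ) {T : E → ℝ}
    (hT : ∀ y ∈ Metric.ball 0 R, ‖fderiv ℝ φ y y‖ ^ 2 ≤ ‖y‖ ^ 2 * T y) :
    0 ≤ ∫ y in Metric.ball 0 R, (T y + V ‖y‖ * ‖φ y‖ ^ 2) ∂μ := by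
  have : Nontrivial E := Module.nontrivial_of_finrank_pos (R := ℝ) (by omega)
  refine setIntegral_ball_nonneg_of_forall_radial μ hf.pos.le fun ω hω => ?_
  simp only [hE, Nat.add_one_sub_one]
  by_cases hint : IntervalIntegrable
    (fun r => r ^ 2 * (T (r • ω) + V ‖r • ω‖ * ‖φ (r • ω)‖ ^ 2)) volume 0 R
  swap
  · rw [intervalIntegral.integral_undef hint]
  have hu : ∀ r : ℝ, HasDerivAt (fun r : ℝ => φ (r • ω)) (fderiv ℝ φ (r • ω) ω) r := fun r =>
    (hφ (r • ω)).hasFDerivAt.comp_hasDerivAt r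
      (by simpa using (hasDerivAt_id r).smul_const ω)
  refine hf.integral_radial_energy_nonneg (fun r _ => (hu r).continuousAt.continuousWithinAt)
    (fun r _ => hu r) ?_ fun r hr => ?_
  · rwa [intervalIntegrable_iff_integrableOn_Icc_of_le hf.pos.le] at hint
  have hnorm : ‖r • ω‖ = r := by rw [norm_smul, hω, mul_one, Real.norm_of_nonneg hr.1.le]
  have hmem : r • ω ∈ Metric.ball 0 R := by rw [mem_ball_zero_iff, hnorm]; exact hr.2
  have hrad : ‖fderiv ℝ φ (r • ω) ω‖ ^ 2 ≤ T (r • ω) := by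
    have h := hT _ hmem
    rw [map_smul, norm_smul, mul_pow, hnorm, Real.norm_of_nonneg hr.1.le] at h
    exact le_of_mul_le_mul_left h (pow_pos hr.1 2)
  rw [hnorm]
  gcongr

end IsTangentSupersolution

section PiIntegral

variable {ι : Type*} [Fintype ι] [DecidableEq ι]

lemma integral_nonneg_of_forall_integral_update {X : ι → Type*} [∀ k, MeasureSpace (X k)]
    [∀ k, SigmaFinite (volume : Measure (X k))] {f : (∀ k, X k) → ℝ} (i : ι)
    (hf : ∀ z, 0 ≤ ∫ x, f (Function.update z i x)) : 0 ≤ ∫ z, f z := by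
  by_cases hint : Integrable f
  swap
  · rw [integral_undef hint]
  have hsplit := (volume_preserving_piEquivPiSubtypeProd X (· = i)).symm
  let : Fintype {k // k = i} := Subtype.fintype _
  have hunique := (volume_preserving_piUnique fun k : {k // k = i} => X k).symm
  have hprod := (hsplit.integrable_comp_emb (MeasurableEquiv.measurableEmbedding _)).2 hint
  rw [← hsplit.integral_comp (MeasurableEquiv.measurableEmbedding _) f]
  refine (integral_nonneg fun y => ?_).trans_eq (integral_prod_symm _ hprod).symm
  refine le_of_le_of_eq ?_ (hunique.integral_comp (MeasurableEquiv.measurableEmbedding _) _)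
  rcases isEmpty_or_nonempty (X i) with hX | ⟨⟨x₀⟩⟩
  · exact integral_nonneg fun x => isEmptyElim (α := X i) x
  refine (hf ((MeasurableEquiv.piEquivPiSubtypeProd X (· = i)).symm
    ((MeasurableEquiv.piUnique fun k : {k // k = i} => X k).symm x₀, y))).trans_eq ?_
  refine integral_congr_ae (.of_forall fun x => congrArg f (funext fun k => ?_))
  by_cases h : k = i
  · subst h
    simp only [Function.update_self, MeasurableEquiv.piEquivPiSubtypeProd,
      Equiv.piEquivPiSubtypeProd, MeasurableEquiv.symm_mk, MeasurableEquiv.coe_mk,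
      Equiv.symm_mk, Equiv.coe_fn_mk, dite_true]
    rfl
  · simp [MeasurableEquiv.piEquivPiSubtypeProd, Equiv.piEquivPiSubtypeProd, h]

lemma integral_nonneg_of_forall_integral_update_add {E : Type*} [NormedAddCommGroup E]
    [MeasureSpace E] [BorelSpace E] [SigmaFinite (volume : Measure E)]
    [(volume : Measure E).IsAddLeftInvariant] {f : (ι → E) → ℝ} (i j : ι)
    (hf : ∀ z, 0 ≤ ∫ x, f (Function.update z i (z j + x))) : 0 ≤ ∫ z, f z :=
  integral_nonneg_of_forall_integral_update i fun z => (hf z).trans_eq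
    (integral_add_left_eq_self (fun x => f (Function.update z i x)) (z j))

end PiIntegral

namespace IsTangentSupersolution

variable {V f f' : ℝ → ℝ} {R : ℝ}

lemma integral_pair_energy_nonneg {ι κ E F : Type*} [Fintype ι] [DecidableEq ι] [Fintype κ]
    [NormedAddCommGroup E] [InnerProductSpace ℝ E] [FiniteDimensional ℝ E]
    [MeasurableSpace E] [BorelSpace E] [NormedAddCommGroup F] [InnerProductSpace ℝ F]
    (hf : IsTangentSupersolution V f f' R) (hE : Module.finrank ℝ E = 3)
    (b : OrthonormalBasis κ ℝ E) {i j : ι} (hij : i ≠ j) {ψ : (ι → E) → F}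
    (hψ : Differentiable ℝ ψ) :
    0 ≤ ∫ z in {z : ι → E | ‖z i - z j‖ < R},
      ((∑ k, ‖fderiv ℝ ψ z (Pi.single i (b k))‖ ^ 2) + V ‖z i - z j‖ * ‖ψ z‖ ^ 2) := by
  have hset : MeasurableSet {z : ι → E | ‖z i - z j‖ < R} :=
    measurableSet_lt (by fun_prop) measurable_const
  rw [← integral_indicator hset]
  refine integral_nonneg_of_forall_integral_update_add i j fun z => ?_
  set γ : E → ι → E := fun x => Function.update z i (z j + x) with hγ
  have hγ' : ∀ x, HasFDerivAt γ (.pi (Pi.single i (.id ℝ E))) x := fun x =>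
    (hasFDerivAt_comp_add_left (f := Function.update z i) (z j)).2 (hasFDerivAt_update z _)
  have hdiff : ∀ x, γ x i - γ x j = x := fun x => by simp [hγ, hij.symm]
  have hfderiv : ∀ x v, fderiv ℝ (ψ ∘ γ) x v = fderiv ℝ ψ (γ x) (Pi.single i v) := fun x v => by
    rw [((hψ (γ x)).hasFDerivAt.comp x (hγ' x)).fderiv, ContinuousLinearMap.comp_apply]
    congr 1
    ext k
    rcases eq_or_ne k i with rfl | hk <;> simp [*]
  have h := hf.integral_ball_energy_nonneg volume hE
    (hψ.comp fun x => (hγ' x).differentiableAt) fun y _ =>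
      norm_sq_map_le_mul_sum_orthonormalBasis b (fderiv ℝ (ψ ∘ γ) y).toLinearMap y
  simp only [ContinuousLinearMap.coe_coe, hfderiv] at h
  refine h.trans_eq ?_
  rw [← integral_indicator Metric.isOpen_ball.measurableSet]
  refine integral_congr_ae (.of_forall fun x => ?_)
  change _ = {z : ι → E | ‖z i - z j‖ < R}.indicator _ (γ x)
  simp only [indicator, mem_ball_zero_iff, mem_ofPred_eq, hdiff, Function.comp_apply]

end IsTangentSupersolution

namespace ScatteringODE

variable (S : ScatteringODE)

/-- The squared frequency of the oscillator equation `f̃_κ'' = -freqSq f̃_κ` beyond `μ^β̃`. -/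
noncomputable def freqSq : ℝ := 1 / 2 * S.a * S.mu ^ (1 - 3 * S.beta)

lemma rpow_beta_pos : 0 < S.mu ^ S.beta := Real.rpow_pos_of_pos S.hmu.1 _

lemma mu_lt_rpow_beta : S.mu < S.mu ^ S.beta := by
  simpa using Real.rpow_lt_rpow_of_exponent_gt S.hmu.1 S.hmu.2 S.hbeta.2

lemma freqSq_nonneg : 0 ≤ S.freqSq := by
  have := S.ha
  have := Real.rpow_pos_of_pos S.hmu.1 (1 - 3 * S.beta)
  unfold freqSq
  positivity

lemma mu_mul_a_eq : S.mu * S.a = S.a * S.mu ^ (1 - S.beta) * S.mu ^ S.beta := by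
  rw [mul_assoc, ← Real.rpow_add S.hmu.1, sub_add_cancel, Real.rpow_one, mul_comm]

lemma freqSq_mul_sq : S.freqSq * (S.mu ^ S.beta) ^ 2 = S.a * S.mu ^ (1 - S.beta) / 2 := by
  have hexp : 1 - 3 * S.beta + S.beta * ((2 : ℕ) : ℝ) = 1 - S.beta := by push_cast; ring
  rw [freqSq, ← Real.rpow_mul_natCast S.hmu.1.le, mul_assoc, ← Real.rpow_add S.hmu.1, hexp]
  ring

lemma exists_half_interaction_mem_Icc :
    ∃ M, ∀ r, 1 / 2 * (S.mu⁻¹ ^ 2 * S.w (r / S.mu)) ∈ Icc 0 M := by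
  obtain ⟨M, hM⟩ := S.hw_bdd
  refine ⟨1 / 2 * (S.mu⁻¹ ^ 2 * M), fun r => ⟨?_, ?_⟩⟩
  · have := S.hw_nonneg (r / S.mu)
    positivity
  · gcongr
    exact hM _

lemma w_div_mu_eq_zero {r : ℝ} (hr : S.mu < r) : S.w (r / S.mu) = 0 :=
  S.hw_supp _ ((one_lt_div S.hmu.1).2 hr)

lemma continuous_ft (κ : ℝ) : Continuous (S.ft κ) :=
  continuous_iff_continuousAt.2 fun r => (S.hft_deriv κ r).continuousAt

lemma ft_zero (κ : ℝ) : S.ft κ 0 = 0 := by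
  rw [S.hft_eq κ 0 (left_mem_Icc.2 S.rpow_beta_pos.le), S.hjt_zero, mul_zero]

lemma ft_nonneg {κ r : ℝ} (hκ : 0 ≤ κ) (hr : r ∈ Icc 0 (S.mu ^ S.beta)) : 0 ≤ S.ft κ r := by
  rw [S.hft_eq κ r hr]
  exact mul_nonneg hκ (S.hjt_nonneg r hr.1)

lemma mul_le_ft_of_le_ft' {κ c R r : ℝ} (hc : ∀ s ∈ Ioo 0 R, c ≤ S.ft' κ s) (hr : r ∈ Icc 0 R) :
    c * r ≤ S.ft κ r := by
  have h := (convex_Icc 0 R).mul_sub_le_image_sub_of_le_deriv (C := c)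
    (S.continuous_ft κ).continuousOn
    (fun s _ => (S.hft_deriv κ s).differentiableAt.differentiableWithinAt)
    (fun s hs => by rw [(S.hft_deriv κ s).deriv]; exact hc s (by simpa using hs))
    0 (left_mem_Icc.2 (hr.1.trans hr.2)) r hr hr.1
  simpa [S.ft_zero] using h

lemma hasDerivAt_ft'_of_mem_Ioo (κ : ℝ) {r : ℝ} (hr : r ∈ Ioo 0 S.mu) :
    HasDerivAt (S.ft' κ) (1 / 2 * (S.mu⁻¹ ^ 2 * S.w (r / S.mu)) * S.ft κ r) r := by
  have hft : ∀ s ∈ Ioo 0 S.mu, S.ft κ s = κ * S.jt s := fun s hs =>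
    S.hft_eq κ s ⟨hs.1.le, (hs.2.trans S.mu_lt_rpow_beta).le⟩
  have hft' : ∀ s ∈ Ioo 0 S.mu, S.ft' κ s = κ * S.jt' s := fun s hs =>
    (S.hft_deriv κ s).unique <| ((S.hjt_deriv s).const_mul κ).congr_of_eventuallyEq
      (eventually_of_mem (Ioo_mem_nhds hs.1 hs.2) hft)
  refine (((S.hjt_ode r hr).const_mul κ).congr_of_eventuallyEq
    (eventually_of_mem (Ioo_mem_nhds hr.1 hr.2) hft')).congr_deriv ?_
  rw [hft r hr]
  ring

lemma ft_eq_of_mem_Icc (κ : ℝ) {r : ℝ} (hr : r ∈ Icc S.mu (S.mu ^ S.beta)) :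
    S.ft κ r = κ * (r - S.mu * S.a) := by
  rw [S.hft_eq κ r ⟨S.hmu.1.le.trans hr.1, hr.2⟩, S.hjt_lin r hr.1]

lemma ft'_eq_of_mem_Icc (κ : ℝ) {r : ℝ} (hr : r ∈ Icc S.mu (S.mu ^ S.beta)) :
    S.ft' κ r = κ := by
  have hline : HasDerivAt (fun s => κ * (s - S.mu * S.a)) κ r := by
    simpa using ((hasDerivAt_id r).sub_const (S.mu * S.a)).const_mul κ
  exact (uniqueDiffOn_Icc S.mu_lt_rpow_beta r hr).eq_deriv _ (S.hft_deriv κ r).hasDerivWithinAt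
    (hline.hasDerivWithinAt.congr (fun s hs => S.ft_eq_of_mem_Icc κ hs) (S.ft_eq_of_mem_Icc κ hr))

lemma hasDerivAt_ft'_of_rpow_beta_lt (κ : ℝ) {r : ℝ} (hr : S.mu ^ S.beta < r) :
    HasDerivAt (S.ft' κ) (-S.freqSq * S.ft κ r) r :=
  (S.hft_ode κ r hr).congr_deriv (by rw [freqSq]; ring)

lemma continuousOn_ft'_Icc_zero_mu (κ : ℝ) : ContinuousOn (S.ft' κ) (Icc 0 S.mu) := by
  obtain ⟨M, hM⟩ := S.exists_half_interaction_mem_Icc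
  obtain ⟨C, hC⟩ := (isCompact_Icc (a := 0) (b := S.mu)).exists_bound_of_continuousOn
    (S.continuous_ft κ).continuousOn
  refine continuousOn_Icc_of_hasDerivAt_of_abs_le (K := M * C) S.hmu.1
    (fun r _ => (S.hft_deriv κ r).hasDerivWithinAt)
    (fun r hr => S.hasDerivAt_ft'_of_mem_Ioo κ hr) fun r hr => ?_
  rw [abs_mul, abs_of_nonneg (hM r).1]
  exact mul_le_mul (hM r).2 (hC r (Ioo_subset_Icc_self hr)) (abs_nonneg _) ((hM r).1.trans (hM r).2)

lemma continuousOn_ft'_Icc_rpow_beta (κ : ℝ) {R : ℝ} (hR : S.mu ^ S.beta < R) :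
    ContinuousOn (S.ft' κ) (Icc (S.mu ^ S.beta) R) := by
  have hrhs : Continuous fun r => -S.freqSq * S.ft κ r := continuous_const.mul (S.continuous_ft κ)
  obtain ⟨C, hC⟩ := (isCompact_Icc (a := S.mu ^ S.beta) (b := R)).exists_bound_of_continuousOn
    hrhs.continuousOn
  exact continuousOn_Icc_of_hasDerivAt_of_abs_le hR
    (fun r _ => (S.hft_deriv κ r).hasDerivWithinAt)
    (fun r hr => S.hasDerivAt_ft'_of_rpow_beta_lt κ hr.1) fun r hr => hC r (Ioo_subset_Icc_self hr)

lemma continuousOn_ft' (κ : ℝ) {R : ℝ} (hR : S.mu ^ S.beta < R) :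
    ContinuousOn (S.ft' κ) (Icc 0 R) := by
  have hb := S.mu_lt_rpow_beta
  have hmid : ContinuousOn (S.ft' κ) (Icc S.mu (S.mu ^ S.beta)) :=
    continuousOn_const.congr fun r hr => S.ft'_eq_of_mem_Icc κ hr
  rw [← Icc_union_Icc_eq_Icc (S.hmu.1.le.trans hb.le) hR.le,
    ← Icc_union_Icc_eq_Icc S.hmu.1.le hb.le]
  exact ((S.continuousOn_ft'_Icc_zero_mu κ).union_of_isClosed hmid isClosed_Icc
    isClosed_Icc).union_of_isClosed (S.continuousOn_ft'_Icc_rpow_beta κ hR)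
    (isClosed_Icc.union isClosed_Icc) isClosed_Icc

lemma hasDerivWithinAt_ft'_Ioi (κ : ℝ) {r : ℝ} (hr : S.mu ^ S.beta ≤ r) :
    HasDerivWithinAt (S.ft' κ) (-S.freqSq * S.ft κ r) (Ioi r) r := by
  have hode : ∀ s ∈ Ioo r (r + 1), HasDerivAt (S.ft' κ) (-S.freqSq * S.ft κ s) s := fun s hs =>
    S.hasDerivAt_ft'_of_rpow_beta_lt κ (hr.trans_lt hs.1)
  have hcont : ContinuousOn (S.ft' κ) (Icc 0 (r + 1)) := S.continuousOn_ft' κ (by linarith)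
  have hlim : Continuous fun s => -S.freqSq * S.ft κ s := continuous_const.mul (S.continuous_ft κ)
  have hmem : Ioo r (r + 1) ∈ 𝓝[>] r := Ioo_mem_nhdsGT (lt_add_one r)
  have hr0 : 0 ≤ r := S.rpow_beta_pos.le.trans hr
  refine (hasDerivWithinAt_Ici_of_tendsto_deriv
    (fun s hs => (hode s hs).differentiableAt.differentiableWithinAt)
    ((hcont r ⟨hr0, by linarith⟩).mono fun s hs => ⟨hr0.trans hs.1.le, hs.2.le⟩) hmem
    ((hlim.tendsto r).mono_left nhdsWithin_le_nhds |>.congr' ?_)).mono Ioi_subset_Ici_self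
  exact eventually_of_mem hmem fun s hs => (hode s hs).deriv.symm

lemma exists_pos_le_ft' {κ : ℝ} (hκ : 0 < κ) :
    ∃ c > 0, ∀ r ∈ Icc 0 (S.mu ^ S.beta), c ≤ S.ft' κ r := by
  obtain ⟨M, hM⟩ := S.exists_half_interaction_mem_Icc
  have hmu := S.hmu.1.le
  have hcont := S.continuousOn_ft'_Icc_zero_mu κ
  have hode := fun r hr => S.hasDerivAt_ft'_of_mem_Ioo κ (r := r) hr
  have hnonneg : ∀ r ∈ Ioo 0 S.mu, 0 ≤ S.ft κ r := fun r hr =>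
    S.ft_nonneg hκ.le ⟨hr.1.le, (hr.2.trans S.mu_lt_rpow_beta).le⟩
  have hmono := monotoneOn_deriv_of_hasDerivAt_mul hcont hode (fun r _ => (hM r).1) hnonneg
  have hend := S.ft'_eq_of_mem_Icc κ (left_mem_Icc.2 S.mu_lt_rpow_beta.le)
  have hexp := exp_neg_mul_deriv_le hmu (S.continuous_ft κ).continuousOn
    (fun r _ => S.hft_deriv κ r) hcont hode (fun r _ => hM r) hnonneg (S.ft_zero κ)
  rw [hend] at hexp
  refine ⟨S.ft' κ 0, (mul_pos (Real.exp_pos _) hκ).trans_le hexp, fun r hr => ?_⟩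
  rcases le_total r S.mu with h | h
  · exact hmono (left_mem_Icc.2 hmu) ⟨hr.1, h⟩ hr.1
  · rw [S.ft'_eq_of_mem_Icc κ ⟨h, hr.2⟩]
    exact (hmono (left_mem_Icc.2 hmu) (right_mem_Icc.2 hmu) hmu).trans_eq hend

/-- Solving the scattering equation for the interaction exhibits it as a quotient of measurable
functions. -/
lemma measurable_wmu3 : Measurable S.wmu3 := by
  obtain ⟨c, hc, hcft'⟩ := S.exists_pos_le_ft' one_pos
  have hquot : Measurable ((Ioo 0 S.mu).indicator fun r => 2 * deriv (S.ft' 1) r / S.ft 1 r) :=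
    (((measurable_deriv _).const_mul 2).div (S.continuous_ft _).measurable).indicator
      measurableSet_Ioo
  have hprofile : Measurable ((Ici 0).indicator fun r => S.mu⁻¹ ^ 2 * S.w (r / S.mu)) := by
    refine hquot.measurable_of_countable_ne (((countable_singleton S.mu).insert 0).mono ?_)
    intro r hne
    by_contra hr
    obtain ⟨h0, hmu⟩ : r ≠ 0 ∧ r ≠ S.mu := by simpa using hr
    refine hne ?_
    rcases h0.lt_or_gt with h0 | h0
    · simp [h0.not_ge, h0.not_gt]
    rw [indicator_of_mem (mem_Ici.2 h0.le)]
    rcases hmu.lt_or_gt with hmu | hmu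
    · have hpos : 0 < S.ft 1 r := (mul_pos hc h0).trans_le <|
        S.mul_le_ft_of_le_ft' (fun s hs => hcft' s (Ioo_subset_Icc_self hs))
          ⟨h0.le, (hmu.trans S.mu_lt_rpow_beta).le⟩
      rw [indicator_of_mem (show r ∈ Ioo 0 S.mu from ⟨h0, hmu⟩),
        (S.hasDerivAt_ft'_of_mem_Ioo 1 ⟨h0, hmu⟩).deriv]
      field_simp
    · rw [indicator_of_notMem fun h => hmu.not_gt h.2, S.w_div_mu_eq_zero hmu, mul_zero]
  have heq : S.wmu3 = (Ici 0).indicator (fun r => S.mu⁻¹ ^ 2 * S.w (r / S.mu)) ∘ norm := by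
    ext z
    simp [wmu3]
  exact heq ▸ hprofile.comp measurable_norm

end ScatteringODE

namespace TangentScattering

variable (S : TangentScattering)

lemma Rb_pos : 0 < S.Rb := S.rpow_beta_pos.trans S.hRb

lemma ft'_sq_add_eq {r : ℝ} (hr : r ∈ Icc (S.mu ^ S.beta) S.Rb) :
    S.ft' S.kappa r ^ 2 + S.freqSq * S.ft S.kappa r ^ 2
      = S.kappa ^ 2 + S.freqSq * (S.kappa * (S.mu ^ S.beta - S.mu * S.a)) ^ 2 := by
  have hb := right_mem_Icc.2 S.mu_lt_rpow_beta.le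
  rw [oscillator_energy_eq (S.continuous_ft _).continuousOn (fun s _ => S.hft_deriv _ s)
    (S.continuousOn_ft'_Icc_rpow_beta _ S.hRb)
    (fun s hs => S.hasDerivAt_ft'_of_rpow_beta_lt _ hs.1) hr,
    S.ft_eq_of_mem_Icc _ hb, S.ft'_eq_of_mem_Icc _ hb]

/-- For small `μ` the tangency radius is small on the scale of the oscillation length. -/
lemma freqSq_mul_Rb_sq_le (hμ : S.a * S.mu ^ (1 - S.beta) ≤ 1 / 20) :
    S.freqSq * S.Rb ^ 2 ≤ 1 / 4 := by
  have henergy := S.ft'_sq_add_eq (right_mem_Icc.2 S.hRb.le)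
  rw [S.htan_val, S.htan_der] at henergy
  have hb := S.rpow_beta_pos
  have hκ := (lt_div_iff₀ (sub_pos.2 S.hsmall)).1 S.hkappa.2
  have hx0 : 0 < S.a * S.mu ^ (1 - S.beta) := mul_pos S.ha (Real.rpow_pos_of_pos S.hmu.1 _)
  have hqb := S.freqSq_mul_sq
  rw [S.mu_mul_a_eq] at hκ henergy
  set x := S.a * S.mu ^ (1 - S.beta)
  have hκx : S.kappa * (1 - x) ≤ 1 := by nlinarith
  have hκ_le : S.kappa ≤ 20 / 19 := by nlinarith [S.hkappa.1]
  have hpot : S.freqSq * (S.kappa * (S.mu ^ S.beta - x * S.mu ^ S.beta)) ^ 2 ≤ x / 2 := by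
    calc _ = x / 2 * (S.kappa * (1 - x)) ^ 2 := by rw [← hqb]; ring
      _ ≤ x / 2 * 1 ^ 2 := by
          have := S.hkappa.1
          gcongr
          exact mul_nonneg (by linarith) (by linarith)
      _ = x / 2 := by ring
  nlinarith [S.hkappa.1]

lemma one_third_le_ft' (hμ : S.a * S.mu ^ (1 - S.beta) ≤ 1 / 20) {r : ℝ}
    (hr : r ∈ Icc (S.mu ^ S.beta) S.Rb) : 1 / 3 ≤ S.ft' S.kappa r := by
  have hq := S.freqSq_mul_Rb_sq_le hμ
  have henergy := (S.ft'_sq_add_eq (left_mem_Icc.2 S.hRb.le)).trans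
    (S.ft'_sq_add_eq (right_mem_Icc.2 S.hRb.le)).symm
  have hosc := oscillator_sq_deriv_sub_le S.freqSq_nonneg (S.continuous_ft S.kappa).continuousOn
    (fun s _ => S.hft_deriv S.kappa s) (S.continuousOn_ft'_Icc_rpow_beta S.kappa S.hRb)
    (fun s hs => S.hasDerivAt_ft'_of_rpow_beta_lt S.kappa hs.1) hr
  rw [henergy, S.htan_val, S.htan_der,
    S.ft'_eq_of_mem_Icc _ (right_mem_Icc.2 S.mu_lt_rpow_beta.le)] at hosc
  have hphase : S.freqSq * (r - S.mu ^ S.beta) ^ 2 ≤ 1 / 4 := by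
    refine (mul_le_mul_of_nonneg_left ?_ S.freqSq_nonneg).trans hq
    have := S.rpow_beta_pos
    have := sub_nonneg.2 hr.1
    gcongr
    linarith [hr.2]
  have hsq : (S.ft' S.kappa r - S.kappa) ^ 2 ≤ 5 / 16 := hosc.trans <|
    calc _ ≤ 1 / 4 * (1 ^ 2 + 1 / 4 : ℝ) := by
          have := mul_nonneg S.freqSq_nonneg (sq_nonneg S.Rb)
          gcongr
      _ = 5 / 16 := by norm_num
  nlinarith [S.hkappa.1]

lemma exists_pos_mul_le_ft (hμ : S.a * S.mu ^ (1 - S.beta) ≤ 1 / 20) :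
    ∃ c > 0, ∀ r ∈ Icc 0 S.Rb, c * r ≤ S.ft S.kappa r := by
  obtain ⟨c, hc, hcft'⟩ := S.exists_pos_le_ft' (zero_lt_one.trans S.hkappa.1)
  refine ⟨min c (1 / 3), lt_min hc (by norm_num), fun r => S.mul_le_ft_of_le_ft' fun s hs => ?_⟩
  rcases le_total s (S.mu ^ S.beta) with h | h
  · exact (min_le_left _ _).trans (hcft' s ⟨hs.1.le, h⟩)
  · exact (min_le_right _ _).trans (S.one_third_le_ft' hμ ⟨h, hs.2.le⟩)

/-- The radial profile of the pair potential `½ (w_μ - U_β)`. -/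
noncomputable def radialPotential (r : ℝ) : ℝ :=
  1 / 2 * (S.mu⁻¹ ^ 2 * S.w (r / S.mu) -
    if S.mu ^ S.beta < r ∧ r < S.Rb then S.a * S.mu ^ (1 - 3 * S.beta) else 0)

lemma radialPotential_norm (z : EuclideanSpace ℝ (Fin 3)) :
    S.radialPotential ‖z‖ = 1 / 2 * (S.wmu3 z - S.Ub z) := rfl

lemma radialPotential_eq_of_le_rpow_beta {r : ℝ} (hr : r ≤ S.mu ^ S.beta) :
    S.radialPotential r = 1 / 2 * (S.mu⁻¹ ^ 2 * S.w (r / S.mu)) := by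
  simp [radialPotential, hr.not_gt]

lemma radialPotential_nonneg_of_le_rpow_beta {r : ℝ} (hr : r ≤ S.mu ^ S.beta) :
    0 ≤ S.radialPotential r := by
  have := S.hw_nonneg (r / S.mu)
  rw [S.radialPotential_eq_of_le_rpow_beta hr]
  positivity

lemma radialPotential_eq_neg_freqSq {r : ℝ} (hr : r ∈ Ioo (S.mu ^ S.beta) S.Rb) :
    S.radialPotential r = -S.freqSq := by
  have hw := S.w_div_mu_eq_zero (S.mu_lt_rpow_beta.trans hr.1)
  rw [radialPotential, if_pos (show _ ∧ _ from hr), hw, ScatteringODE.freqSq]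
  ring

lemma radialPotential_eq_zero {r : ℝ} (hr : S.Rb ≤ r) : S.radialPotential r = 0 := by
  have hmu : S.mu < r := S.mu_lt_rpow_beta.trans (S.hRb.trans_le hr)
  simp [radialPotential, S.w_div_mu_eq_zero hmu, hr.not_gt]

lemma isTangentSupersolution (hμ : S.a * S.mu ^ (1 - S.beta) ≤ 1 / 20) :
    IsTangentSupersolution S.radialPotential (S.ft S.kappa) (S.ft' S.kappa) S.Rb where
  pos := S.Rb_pos
  continuousOn := (S.continuous_ft _).continuousOn
  hasDerivAt r _ := S.hft_deriv _ r
  continuousOn_deriv := S.continuousOn_ft' _ S.hRb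
  exists_hasDerivWithinAt_deriv_le r hr := by
    have hb := S.mu_lt_rpow_beta
    have hft : r ≤ S.mu ^ S.beta → 0 ≤ S.ft S.kappa r := fun h =>
      S.ft_nonneg (zero_le_one.trans S.hkappa.1.le) ⟨hr.1.le, h⟩
    rcases lt_or_ge r S.mu with hmu | hmu
    · refine ⟨_, (S.hasDerivAt_ft'_of_mem_Ioo _ ⟨hr.1, hmu⟩).hasDerivWithinAt, ?_⟩
      rw [S.radialPotential_eq_of_le_rpow_beta (hmu.trans hb).le]
    rcases lt_trichotomy r (S.mu ^ S.beta) with h | rfl | h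
    · have hconst : ∀ s ∈ Ioo r (S.mu ^ S.beta), S.ft' S.kappa s = S.kappa := fun s hs =>
        S.ft'_eq_of_mem_Icc _ ⟨hmu.trans hs.1.le, hs.2.le⟩
      exact ⟨0, (hasDerivWithinAt_const r _ S.kappa).congr_of_eventuallyEq
        (eventually_of_mem (Ioo_mem_nhdsGT h) hconst) (S.ft'_eq_of_mem_Icc _ ⟨hmu, h.le⟩),
        mul_nonneg (S.radialPotential_nonneg_of_le_rpow_beta h.le) (hft h.le)⟩
    · refine ⟨_, S.hasDerivWithinAt_ft'_Ioi _ le_rfl, mul_le_mul_of_nonneg_right ?_ (hft le_rfl)⟩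
      exact (neg_nonpos.2 S.freqSq_nonneg).trans (S.radialPotential_nonneg_of_le_rpow_beta le_rfl)
    · refine ⟨_, S.hasDerivWithinAt_ft'_Ioi _ h.le, ?_⟩
      rw [S.radialPotential_eq_neg_freqSq ⟨h, hr.2⟩]
  exists_mul_le := S.exists_pos_mul_le_ft hμ
  apply_eq := S.htan_val
  deriv_eq := S.htan_der

lemma measurable_Ub : Measurable S.Ub :=
  Measurable.ite ((measurableSet_lt measurable_const measurable_norm).inter
    (measurableSet_lt measurable_norm measurable_const)) measurable_const measurable_const

lemma measurable_radialPotential_norm :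
    Measurable fun z : EuclideanSpace ℝ (Fin 3) => S.radialPotential ‖z‖ :=
  (S.measurable_wmu3.sub S.measurable_Ub).const_mul (1 / 2)

lemma exists_norm_radialPotential_le : ∃ C, ∀ r, ‖S.radialPotential r‖ ≤ C := by
  obtain ⟨M, hM⟩ := S.exists_half_interaction_mem_Icc
  refine ⟨M + S.freqSq, fun r => ?_⟩
  have hq := S.freqSq_nonneg
  rcases le_or_gt r (S.mu ^ S.beta) with h | h
  · rw [Real.norm_of_nonneg (S.radialPotential_nonneg_of_le_rpow_beta h),
      S.radialPotential_eq_of_le_rpow_beta h]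
    linarith [(hM r).2]
  have hM0 := (hM r).1.trans (hM r).2
  rcases lt_or_ge r S.Rb with hr | hr
  · rw [S.radialPotential_eq_neg_freqSq ⟨h, hr⟩, norm_neg, Real.norm_of_nonneg hq]
    linarith
  · rw [S.radialPotential_eq_zero hr, norm_zero]
    linarith

variable {ι : Type*} (i j : ι)

lemma integrable_radialPotential_mul {ν : Measure (ι → EuclideanSpace ℝ (Fin 3))}
    {g : (ι → EuclideanSpace ℝ (Fin 3)) → ℝ} (hg : Integrable g ν) :
    Integrable (fun z => S.radialPotential ‖z i - z j‖ * g z) ν := by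
  obtain ⟨C, hC⟩ := S.exists_norm_radialPotential_le
  have hsub : Measurable fun z : ι → EuclideanSpace ℝ (Fin 3) => z i - z j := by fun_prop
  exact hg.bdd_mul (S.measurable_radialPotential_norm.comp hsub).aestronglyMeasurable
    (.of_forall fun z => hC _)

lemma half_mul_integral_eq_setIntegral_radialPotential [Fintype ι]
    (g : (ι → EuclideanSpace ℝ (Fin 3)) → ℝ) :
    1 / 2 * ∫ z, (S.wmu3 (z i - z j) - S.Ub (z i - z j)) * g z =
      ∫ z in {z | ‖z i - z j‖ < S.Rb}, S.radialPotential ‖z i - z j‖ * g z := by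
  rw [setIntegral_eq_integral_of_forall_compl_eq_zero, ← integral_const_mul]
  · simp only [S.radialPotential_norm, mul_assoc]
  · intro z hz
    rw [S.radialPotential_eq_zero (not_lt.1 hz), zero_mul]

end TangentScattering

theorem quadratic_form_nonneg_general (S : TangentScattering)
    (hμ : S.a * S.mu ^ (1 - S.beta) ≤ 1 / 20) {ι F : Type*} [Fintype ι] [DecidableEq ι]
    [NormedAddCommGroup F] [InnerProductSpace ℝ F] {i j : ι} (hij : i ≠ j)
    {ψ : (ι → EuclideanSpace ℝ (Fin 3)) → F} (hψ : Differentiable ℝ ψ)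
    (hkin : IntegrableOn (fun z => ∑ k : Fin 3,
      ‖fderiv ℝ ψ z (Pi.single i (EuclideanSpace.single k (1 : ℝ)))‖ ^ 2)
      {z | ‖z i - z j‖ < S.Rb})
    (hL2 : IntegrableOn (fun z => ‖ψ z‖ ^ 2) {z | ‖z i - z j‖ < S.Rb}) :
    0 ≤ (∫ z in {z | ‖z i - z j‖ < S.Rb}, ∑ k : Fin 3,
        ‖fderiv ℝ ψ z (Pi.single i (EuclideanSpace.single k (1 : ℝ)))‖ ^ 2) +
      1 / 2 * ∫ z, (S.wmu3 (z i - z j) - S.Ub (z i - z j)) * ‖ψ z‖ ^ 2 := by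
  rw [S.half_mul_integral_eq_setIntegral_radialPotential,
    ← integral_add hkin (S.integrable_radialPotential_mul i j hL2)]
  simpa only [EuclideanSpace.basisFun_apply] using
    (S.isTangentSupersolution hμ).integral_pair_energy_nonneg (by simp)
      (EuclideanSpace.basisFun (Fin 3) ℝ) hij hψ

lemma exists_pos_forall_mul_rpow_le {a s ε : ℝ} (ha : 0 < a) (hs : 0 < s) (hε : 0 < ε) :
    ∃ μ₀ > 0, ∀ μ, 0 ≤ μ → μ ≤ μ₀ → a * μ ^ s ≤ ε := by
  refine ⟨(ε / a) ^ s⁻¹, by positivity, fun μ hμ hμ₀ => ?_⟩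
  have h := Real.rpow_le_rpow hμ hμ₀ hs.le
  rw [Real.rpow_inv_rpow (by positivity) hs.ne', le_div_iff₀ ha] at h
  linarith

lemma integrable_norm_sq_of_hasCompactSupport {X F : Type*} [TopologicalSpace X]
    [MeasurableSpace X] [OpensMeasurableSpace X] {ν : Measure X} [IsFiniteMeasureOnCompacts ν]
    [NormedAddCommGroup F] {g : X → F} (hg : Continuous g) (hgc : HasCompactSupport g) :
    Integrable (fun x => ‖g x‖ ^ 2) ν :=
  (hg.norm.pow 2).integrable_of_hasCompactSupport <| hgc.mono fun x hx hgx => hx (by simp [hgx])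

lemma integrable_norm_fderiv_apply_sq {V F : Type*} [NormedAddCommGroup V] [NormedSpace ℝ V]
    [MeasurableSpace V] [OpensMeasurableSpace V] {ν : Measure V} [IsFiniteMeasureOnCompacts ν]
    [NormedAddCommGroup F] [NormedSpace ℝ F] {ψ : V → F} (hψ : ContDiff ℝ 1 ψ)
    (hψc : HasCompactSupport ψ) (v : V) : Integrable (fun z => ‖fderiv ℝ ψ z v‖ ^ 2) ν :=
  integrable_norm_sq_of_hasCompactSupport
    ((hψ.continuous_fderiv one_ne_zero).clm_apply continuous_const) (hψc.fderiv_apply (𝕜 := ℝ) v)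

/-- Quadratic-form positivity: for every `N ≥ 2` and every smooth compactly supported `ψ` on
`(ℝ³)^N`, `∫ 1_{|z₁-z₂| < R_β} |∇_{z₁}ψ|² + ½ ∫ (w_μ - U_β)(z₁-z₂) |ψ|² ≥ 0`. -/
theorem quadratic_form_nonneg (a beta : ℝ) (ha : 0 < a)
    (hbeta : beta ∈ Set.Ioo (1/3 : ℝ) 1) :
    ∃ μ₀ > (0:ℝ), ∀ S : TangentScattering, S.a = a → S.beta = beta → S.mu ≤ μ₀ →
      ∀ N : ℕ, ∀ hN : 2 ≤ N,
      ∀ ψ : (Fin N → EuclideanSpace ℝ (Fin 3)) → ℂ, ContDiff ℝ (⊤ : ℕ∞) ψ → HasCompactSupport ψ →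
        0 ≤ (∫ z in {z : Fin N → EuclideanSpace ℝ (Fin 3) |
              ‖z ⟨0, by omega⟩ - z ⟨1, by omega⟩‖ < S.Rb},
              ∑ i : Fin 3,
                ‖fderiv ℝ ψ z (Pi.single (⟨0, by omega⟩ : Fin N)
                  (EuclideanSpace.single i (1:ℝ)))‖ ^ 2) +
            (1/2) * ∫ z : Fin N → EuclideanSpace ℝ (Fin 3),
              (S.wmu3 (z ⟨0, by omega⟩ - z ⟨1, by omega⟩) -
                S.Ub (z ⟨0, by omega⟩ - z ⟨1, by omega⟩)) * ‖ψ z‖ ^ 2 := by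
  obtain ⟨μ₀, hμ₀, hsmall⟩ :=
    exists_pos_forall_mul_rpow_le ha (sub_pos.2 hbeta.2) (show (0 : ℝ) < 1 / 20 by norm_num)
  refine ⟨μ₀, hμ₀, ?_⟩
  rintro S rfl rfl hS N hN ψ hψ hψc
  have hkin := integrable_finsetSum Finset.univ fun (k : Fin 3) _ =>
    integrable_norm_fderiv_apply_sq (ν := volume) (hψ.of_le (by simp)) hψc
      (Pi.single (⟨0, by omega⟩ : Fin N) (EuclideanSpace.single k (1 : ℝ)))
  have hL2 := integrable_norm_sq_of_hasCompactSupport (ν := volume) hψ.continuous hψc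
  exact quadratic_form_nonneg_general S (hsmall _ S.hmu.1.le hS) (by simp)
    (hψ.differentiable (by simp)) hkin.integrableOn hL2.integrableOn
end
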